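/- (q-Genocchi α,β lemma.) Let A_q(t) = Σ_{n≥0} G_{n,q} t^n/[n]_q! (so that A_q(t)·(e_q(t)+1) = 2t), and define (α_n), (β_n) by t·(D_q A_q)(t) = (Σ α_n t^n/[n]_q!)·A_q(qt) and A_q(t) = (Σ β_n t^n/[n]_q!)·A_q(qt) in K[[t]] (these divisions are well defined and the α_n, β_n unique because A_q(qt) = qt·u(t) with u(t) a unit of K[[t]], and both t·(D_q A_q)(t) and A_q(t) are divisible by t). Then α_0 = 1/q and α_n = −(1/(2q)) Σ_{k=0}^{n} [n choose k]_q G_{k,q} for all n ≥ 1; in particular α_1 = −1/(2q) and α_n = G_{n,q}/(2q) for n ≥ 2. Moreover β_0 = 1/q and β_n = ((q−1)/(2q)) Σ_{k=0}^{n} [n choose k]_q G_{k,q} for all n ≥ 1; in particular β_1 = (q−1)/(2q) and β_n = −((q−1)/(2q)) G_{n,q} for n ≥ 2. -/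

import Mathlib

noncomputable section

open Finset MvPolynomial

/-- The `q`-integer `[n]_q = 1 + q + ⋯ + q^(n-1)`. -/
def qInt {K : Type*} [Field K] (q : K) (n : ℕ) : K := ∑ i ∈ Finset.range n, q ^ i

/-- The `q`-factorial `[n]_q! = [1]_q [2]_q ⋯ [n]_q`. -/
def qFact {K : Type*} [Field K] (q : K) (n : ℕ) : K := ∏ k ∈ Finset.range n, qInt q (k + 1)

/-- The `q`-binomial coefficient `[n choose k]_q`. -/
def qChoose {K : Type*} [Field K] (q : K) (n k : ℕ) : K :=
  qFact q n / (qFact q k * qFact q (n - k))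

/-- The partial `q`-derivative in the variable `v` (v = 0 is `x`, v = 1 is `y`),
the linear operator determined by `D_{q,x}(x^m y^l) = [m]_q x^(m-1) y^l` and
`D_{q,y}(x^m y^l) = [l]_q x^m y^(l-1)`. -/
def qDeriv {K : Type*} [Field K] (q : K) (v : Fin 2) (P : MvPolynomial (Fin 2) K) :
    MvPolynomial (Fin 2) K :=
  ∑ m ∈ P.support, monomial (m - Finsupp.single v 1) (P.coeff m * qInt q (m v))

/-- Substitution `x ↦ c·x` in a polynomial in the two variables `x = X 0`, `y = X 1`. -/
def substX {K : Type*} [Field K] (c : K) (P : MvPolynomial (Fin 2) K) :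
    MvPolynomial (Fin 2) K :=
  aeval (fun i : Fin 2 => if i = 0 then C c * X 0 else X 1) P

/-- Substitution `y ↦ c·y` in a polynomial in the two variables `x = X 0`, `y = X 1`. -/
def substY {K : Type*} [Field K] (c : K) (P : MvPolynomial (Fin 2) K) :
    MvPolynomial (Fin 2) K :=
  aeval (fun i : Fin 2 => if i = 0 then X 0 else C c * X 1) P

/-- The 2D `q`-Appell polynomials attached to a coefficient sequence `a`:
`A_{n,q}(x,y) = Σ_{i+j+k=n} ([n]_q!/([i]_q![j]_q![k]_q!)) a_i q^(k(k-1)/2) x^j y^k`. -/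
def appell {K : Type*} [Field K] (q : K) (a : ℕ → K) (n : ℕ) : MvPolynomial (Fin 2) K :=
  ∑ i ∈ Finset.range (n + 1), ∑ j ∈ Finset.range (n + 1 - i),
    monomial (Finsupp.single (0 : Fin 2) j + Finsupp.single (1 : Fin 2) (n - i - j))
      (qFact q n / (qFact q i * qFact q j * qFact q (n - i - j)) * a i *
        q ^ ((n - i - j) * (n - i - j - 1) / 2))

/-!
Let `θ = t D_q`. Since `[i + j]_q = [i]_q + q ^ i [j]_q`, it satisfies the twisted Leibniz rule
`θ(F H) = θF · H + F(qt) · θH`, and `q ^ n = 1 + (q - 1) [n]_q` says that `F(qt) = F + (q - 1) θF`.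
As `θ e_q = t e_q`, applying `θ` and `t ↦ qt` to `A (e_q + 1) = 2t` gives two relations from
which `2q θA = (2 - A e_q) · A(qt)` follows after cancelling `e_q + 1`, and then
`2q A = (2 + (q - 1) A e_q) · A(qt)`. Hence the generating series of `α` and `β`, multiplied by
`2q`, are `2 - A e_q` and `2 + (q - 1) A e_q`, and the coefficients of `A e_q` are the binomial
sums of `G`.
-/

open scoped PowerSeries

section

variable {K : Type*} [Field K] {q : K}

theorem qInt_add (q : K) (m n : ℕ) : qInt q (m + n) = qInt q m + q ^ m * qInt q n := by
  simp only [qInt, sum_range_add, pow_add, mul_sum]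

theorem sub_one_mul_qInt (q : K) (n : ℕ) : (q - 1) * qInt q n = q ^ n - 1 :=
  mul_geom_sum q n

theorem qFact_zero (q : K) : qFact q 0 = 1 :=
  prod_range_zero _

theorem qFact_succ (q : K) (n : ℕ) : qFact q (n + 1) = qFact q n * qInt q (n + 1) :=
  prod_range_succ _ n

theorem qFact_one (q : K) : qFact q 1 = 1 := by
  simp [qFact, qInt]

theorem qFact_ne_zero (hq : ∀ n : ℕ, 1 ≤ n → qInt q n ≠ 0) (n : ℕ) : qFact q n ≠ 0 :=
  prod_ne_zero_iff.mpr fun k _ => hq (k + 1) k.succ_pos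

theorem qInt_succ_div_qFact_succ (hq : ∀ n : ℕ, 1 ≤ n → qInt q n ≠ 0) (n : ℕ) :
    qInt q (n + 1) / qFact q (n + 1) = 1 / qFact q n := by
  rw [qFact_succ, div_mul_cancel_right₀ (hq (n + 1) n.succ_pos), one_div]

/-- The `q`-exponential generating series `Σ a_n t^n / [n]_q!` of a sequence `a`. -/
def qEGF (q : K) (a : ℕ → K) : K⟦X⟧ :=
  PowerSeries.mk fun n => a n / qFact q n

/-- The `q`-exponential series `e_q(t) = Σ t^n / [n]_q!`. -/
def qExp (q : K) : K⟦X⟧ :=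
  qEGF q fun _ => 1

/-- The `q`-Euler operator `t D_q`, which multiplies the coefficient of `t^n` by `[n]_q`. It is used
in place of `D_q` because it involves no shift of indices. -/
def qEuler (q : K) : K⟦X⟧ →ₗ[K] K⟦X⟧ where
  toFun f := PowerSeries.mk fun n => qInt q n * PowerSeries.coeff n f
  map_add' f g := by ext n; simp [mul_add]
  map_smul' c f := by ext n; simp [mul_left_comm]

theorem coeff_qEGF (q : K) (a : ℕ → K) (n : ℕ) :
    PowerSeries.coeff n (qEGF q a) = a n / qFact q n :=
  PowerSeries.coeff_mk _ _

theorem coeff_qEuler (q : K) (f : K⟦X⟧) (n : ℕ) :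
    PowerSeries.coeff n (qEuler q f) = qInt q n * PowerSeries.coeff n f := by
  simp [qEuler]

theorem rescale_qEGF (q : K) (a : ℕ → K) :
    PowerSeries.rescale q (qEGF q a) = PowerSeries.mk fun n => a n * q ^ n / qFact q n := by
  ext n
  rw [PowerSeries.coeff_rescale, coeff_qEGF, PowerSeries.coeff_mk, mul_comm (a n), mul_div_assoc]

theorem coeff_qEGF_mul_qExp (hq : ∀ n : ℕ, 1 ≤ n → qInt q n ≠ 0) (a : ℕ → K) (n : ℕ) :
    PowerSeries.coeff n (qEGF q a * qExp q) =
      (∑ k ∈ range (n + 1), qChoose q n k * a k) / qFact q n := by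
  rw [PowerSeries.coeff_mul, Nat.sum_antidiagonal_eq_sum_range_succ_mk, sum_div]
  refine sum_congr rfl fun k _ => ?_
  have hn := qFact_ne_zero hq n
  simp only [qExp, coeff_qEGF, qChoose]
  field_simp

theorem mul_eq_of_C_mul_qEGF_eq (hq : ∀ n : ℕ, 1 ≤ n → qInt q n ≠ 0) {a b : ℕ → K} {r s c : K}
    (h : PowerSeries.C r * qEGF q a = PowerSeries.C s + PowerSeries.C c * (qEGF q b * qExp q))
    (n : ℕ) :
    r * a n = (if n = 0 then s else 0) + c * ∑ k ∈ range (n + 1), qChoose q n k * b k := by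
  have hn := qFact_ne_zero hq n
  have hcoeff := congrArg (PowerSeries.coeff n) h
  rw [map_add, PowerSeries.coeff_C_mul, PowerSeries.coeff_C_mul, coeff_qEGF,
    coeff_qEGF_mul_qExp hq, PowerSeries.coeff_C] at hcoeff
  rcases eq_or_ne n 0 with rfl | hn0
  · simpa [qFact_zero] using hcoeff
  · rw [if_neg hn0] at hcoeff ⊢
    field_simp at hcoeff
    linear_combination hcoeff

theorem qExp_add_one_ne_zero (q : K) : qExp q + 1 ≠ 0 := by
  intro h
  simpa [qExp, coeff_qEGF, qFact_one, PowerSeries.coeff_one] using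
    congrArg (PowerSeries.coeff 1) h

theorem qEuler_mul (q : K) (f g : K⟦X⟧) :
    qEuler q (f * g) = qEuler q f * g + PowerSeries.rescale q f * qEuler q g := by
  ext n
  simp only [map_add, coeff_qEuler, PowerSeries.coeff_mul, PowerSeries.coeff_rescale, mul_sum,
    ← sum_add_distrib]
  refine sum_congr rfl fun ij hij => ?_
  rw [← mem_antidiagonal.mp hij, qInt_add]
  ring

theorem rescale_eq_add_qEuler (q : K) (f : K⟦X⟧) :
    PowerSeries.rescale q f = f + PowerSeries.C (q - 1) * qEuler q f := by
  ext n
  rw [map_add, PowerSeries.coeff_C_mul, PowerSeries.coeff_rescale, coeff_qEuler, ← mul_assoc,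
    sub_one_mul_qInt]
  ring

theorem qEuler_one (q : K) : qEuler q 1 = 0 := by
  ext n
  rcases eq_or_ne n 0 with rfl | hn <;> simp [coeff_qEuler, PowerSeries.coeff_one, qInt, *]

theorem qEuler_X (q : K) : qEuler q PowerSeries.X = PowerSeries.X := by
  ext n
  rcases eq_or_ne n 1 with rfl | hn <;> simp [coeff_qEuler, PowerSeries.coeff_X, qInt, *]

theorem qEuler_qEGF (hq : ∀ n : ℕ, 1 ≤ n → qInt q n ≠ 0) (a : ℕ → K) :
    qEuler q (qEGF q a) =
      PowerSeries.mk fun n => if n = 0 then (0 : K) else a n / qFact q (n - 1) := by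
  ext n
  rw [coeff_qEuler, coeff_qEGF, PowerSeries.coeff_mk, mul_div_left_comm]
  cases n with
  | zero => simp [qInt]
  | succ n =>
    rw [qInt_succ_div_qFact_succ hq, if_neg n.succ_ne_zero, Nat.add_sub_cancel, mul_one_div]

theorem qEuler_qExp (hq : ∀ n : ℕ, 1 ≤ n → qInt q n ≠ 0) :
    qEuler q (qExp q) = PowerSeries.X * qExp q := by
  ext n
  cases n with
  | zero => simp [coeff_qEuler, qInt]
  | succ n =>
    rw [coeff_qEuler, PowerSeries.coeff_succ_X_mul, qExp, coeff_qEGF, coeff_qEGF, mul_one_div,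
      qInt_succ_div_qFact_succ hq]

theorem C_mul_qEuler_eq_of_mul_qExp_add_one (hq : ∀ n : ℕ, 1 ≤ n → qInt q n ≠ 0) {A : K⟦X⟧}
    (hA : A * (qExp q + 1) = 2 * PowerSeries.X) :
    PowerSeries.C (2 * q) * qEuler q A = (2 - A * qExp q) * PowerSeries.rescale q A := by
  have euler_relation : qEuler q A * (qExp q + 1) +
      PowerSeries.rescale q A * (PowerSeries.X * qExp q) = 2 * PowerSeries.X := by
    have h := congrArg (qEuler q) hA
    rwa [qEuler_mul, map_add, qEuler_one, add_zero, qEuler_qExp hq, two_mul, map_add, qEuler_X,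
      ← two_mul] at h
  have rescale_relation : PowerSeries.rescale q A *
      (qExp q + PowerSeries.C (q - 1) * (PowerSeries.X * qExp q) + 1) =
        2 * (PowerSeries.C q * PowerSeries.X) := by
    have h := congrArg (PowerSeries.rescale q) hA
    rwa [map_mul, map_add, map_one, rescale_eq_add_qEuler q (qExp q), qEuler_qExp hq, map_mul,
      map_ofNat, PowerSeries.rescale_X] at h
  refine mul_right_cancel₀ (qExp_add_one_ne_zero q) ?_
  simp only [map_mul, map_sub, map_one, map_ofNat] at rescale_relation ⊢
  linear_combination 2 * PowerSeries.C q * euler_relation - 2 * rescale_relation +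
    PowerSeries.rescale q A * qExp q * hA

theorem C_mul_eq_of_mul_qExp_add_one (hq : ∀ n : ℕ, 1 ≤ n → qInt q n ≠ 0) {A : K⟦X⟧}
    (hA : A * (qExp q + 1) = 2 * PowerSeries.X) :
    PowerSeries.C (2 * q) * A =
      (2 + PowerSeries.C (q - 1) * (A * qExp q)) * PowerSeries.rescale q A := by
  have hEuler := C_mul_qEuler_eq_of_mul_qExp_add_one hq hA
  have hRescale := rescale_eq_add_qEuler q A
  simp only [map_mul, map_sub, map_one, map_ofNat] at hEuler hRescale ⊢
  linear_combination (1 - PowerSeries.C q) * hEuler - 2 * PowerSeries.C q * hRescale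

/-- `G` is the sequence of `q`-Genocchi numbers, characterised by its initial values and its
recurrence. -/
structure IsQGenocchi (q : K) (G : ℕ → K) : Prop where
  zero : G 0 = 0
  one : G 1 = 1
  add_sum_eq_zero : ∀ n : ℕ, 2 ≤ n → G n + ∑ k ∈ range (n + 1), qChoose q n k * G k = 0

namespace IsQGenocchi

variable {G : ℕ → K}

theorem sum_qChoose_mul_zero (hG : IsQGenocchi q G) :
    ∑ k ∈ range (0 + 1), qChoose q 0 k * G k = 0 := by
  simp [hG.zero]

theorem sum_qChoose_mul_one (hG : IsQGenocchi q G) :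
    ∑ k ∈ range (1 + 1), qChoose q 1 k * G k = 1 := by
  simp [sum_range_succ, hG.zero, hG.one, qChoose, qFact_zero, qFact_one]

theorem sum_qChoose_mul_eq_neg (hG : IsQGenocchi q G) {n : ℕ} (hn : 2 ≤ n) :
    ∑ k ∈ range (n + 1), qChoose q n k * G k = -G n :=
  eq_neg_of_add_eq_zero_right (hG.add_sum_eq_zero n hn)

theorem qEGF_mul_qExp_add_one (hG : IsQGenocchi q G) (hq : ∀ n : ℕ, 1 ≤ n → qInt q n ≠ 0) :
    qEGF q G * (qExp q + 1) = 2 * PowerSeries.X := by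
  ext n
  rw [mul_add, mul_one, map_add, coeff_qEGF_mul_qExp hq, coeff_qEGF, ← add_div, two_mul, map_add,
    PowerSeries.coeff_X]
  rcases n with _ | _ | n
  · simp [hG.zero]
  · rw [zero_add, hG.sum_qChoose_mul_one, hG.one, qFact_one, div_one, if_pos rfl]
  · rw [hG.sum_qChoose_mul_eq_neg (by omega), neg_add_cancel, zero_div, if_neg (by omega), add_zero]

theorem coeff_one_qEGF (hG : IsQGenocchi q G) : PowerSeries.coeff 1 (qEGF q G) = 1 := by
  rw [coeff_qEGF, hG.one, qFact_one, div_one]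

theorem rescale_qEGF_ne_zero (hG : IsQGenocchi q G) (hq0 : q ≠ 0) :
    PowerSeries.rescale q (qEGF q G) ≠ 0 := by
  intro h
  have h₁ := congrArg (PowerSeries.coeff 1) h
  rw [PowerSeries.coeff_rescale, hG.coeff_one_qEGF, pow_one, mul_one, map_zero] at h₁
  exact hq0 h₁

-- In characteristic two, `A (e_q + 1) = 2t` would be a product of nonzero series equal to zero.
theorem two_ne_zero (hG : IsQGenocchi q G) (hq : ∀ n : ℕ, 1 ≤ n → qInt q n ≠ 0) :
    (2 : K) ≠ 0 := by
  intro h2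
  have hA : qEGF q G ≠ 0 := fun h => by simpa [h] using hG.coeff_one_qEGF
  refine mul_ne_zero hA (qExp_add_one_ne_zero q) ?_
  rw [hG.qEGF_mul_qExp_add_one hq, ← map_ofNat PowerSeries.C 2, h2, map_zero, zero_mul]

theorem C_mul_eq_of_qEuler_eq_mul_rescale (hG : IsQGenocchi q G) (hq0 : q ≠ 0)
    (hq : ∀ n : ℕ, 1 ≤ n → qInt q n ≠ 0) {L : K⟦X⟧}
    (hL : qEuler q (qEGF q G) = L * PowerSeries.rescale q (qEGF q G)) :
    PowerSeries.C (2 * q) * L = PowerSeries.C 2 + PowerSeries.C (-1) * (qEGF q G * qExp q) := by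
  refine mul_right_cancel₀ (hG.rescale_qEGF_ne_zero hq0) ?_
  rw [mul_assoc, ← hL, C_mul_qEuler_eq_of_mul_qExp_add_one hq (hG.qEGF_mul_qExp_add_one hq),
    map_ofNat, map_neg, map_one, neg_one_mul, sub_eq_add_neg]

theorem C_mul_eq_of_eq_mul_rescale (hG : IsQGenocchi q G) (hq0 : q ≠ 0)
    (hq : ∀ n : ℕ, 1 ≤ n → qInt q n ≠ 0) {B : K⟦X⟧}
    (hB : qEGF q G = B * PowerSeries.rescale q (qEGF q G)) :
    PowerSeries.C (2 * q) * B = PowerSeries.C 2 + PowerSeries.C (q - 1) * (qEGF q G * qExp q) := by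
  refine mul_right_cancel₀ (hG.rescale_qEGF_ne_zero hq0) ?_
  rw [mul_assoc, ← hB, C_mul_eq_of_mul_qExp_add_one hq (hG.qEGF_mul_qExp_add_one hq),
    map_ofNat]

variable {a : ℕ → K} {c : K}

theorem zero_eq_of_C_mul_qEGF_eq (hG : IsQGenocchi q G) (hq0 : q ≠ 0)
    (hq : ∀ n : ℕ, 1 ≤ n → qInt q n ≠ 0)
    (ha : PowerSeries.C (2 * q) * qEGF q a =
      PowerSeries.C 2 + PowerSeries.C c * (qEGF q G * qExp q)) :
    a 0 = 1 / q := by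
  have h := mul_eq_of_C_mul_qEGF_eq hq ha 0
  rw [hG.sum_qChoose_mul_zero, mul_zero, add_zero, if_pos rfl, mul_assoc] at h
  rw [eq_div_iff hq0, mul_comm]
  exact mul_left_cancel₀ (hG.two_ne_zero hq) (h.trans (mul_one 2).symm)

theorem eq_of_C_mul_qEGF_eq (hG : IsQGenocchi q G) (hq0 : q ≠ 0)
    (hq : ∀ n : ℕ, 1 ≤ n → qInt q n ≠ 0)
    (ha : PowerSeries.C (2 * q) * qEGF q a =
      PowerSeries.C 2 + PowerSeries.C c * (qEGF q G * qExp q))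
    {n : ℕ} (hn : 1 ≤ n) :
    a n = c / (2 * q) * ∑ k ∈ range (n + 1), qChoose q n k * G k := by
  have h := mul_eq_of_C_mul_qEGF_eq hq ha n
  rw [if_neg (Nat.one_le_iff_ne_zero.mp hn), zero_add] at h
  rw [div_mul_eq_mul_div, eq_div_iff (mul_ne_zero (hG.two_ne_zero hq) hq0), mul_comm, h]

end IsQGenocchi

end

theorem qGenocchi_alpha_beta_general
    {K : Type*} [Field K] (q : K) (hq0 : q ≠ 0)
    (hq : ∀ n : ℕ, 1 ≤ n → qInt q n ≠ 0)
    (G : ℕ → K) (hG0 : G 0 = 0) (hG1 : G 1 = 1)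
    (hG : ∀ n : ℕ, 2 ≤ n → G n + ∑ k ∈ Finset.range (n + 1), qChoose q n k * G k = 0)
    (α β : ℕ → K)
    (hα : PowerSeries.mk (fun n => if n = 0 then (0 : K) else G n / qFact q (n - 1)) =
      PowerSeries.mk (fun n => α n / qFact q n) *
        PowerSeries.mk (fun n => G n * q ^ n / qFact q n))
    (hβ : PowerSeries.mk (fun n => G n / qFact q n) =
      PowerSeries.mk (fun n => β n / qFact q n) *
        PowerSeries.mk (fun n => G n * q ^ n / qFact q n)) :
    α 0 = 1 / q ∧
    (∀ n : ℕ, 1 ≤ n →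
      α n = -(1 / (2 * q)) * ∑ k ∈ Finset.range (n + 1), qChoose q n k * G k) ∧
    α 1 = -(1 / (2 * q)) ∧
    (∀ n : ℕ, 2 ≤ n → α n = G n / (2 * q)) ∧
    β 0 = 1 / q ∧
    (∀ n : ℕ, 1 ≤ n →
      β n = ((q - 1) / (2 * q)) * ∑ k ∈ Finset.range (n + 1), qChoose q n k * G k) ∧
    β 1 = (q - 1) / (2 * q) ∧
    (∀ n : ℕ, 2 ≤ n → β n = -((q - 1) / (2 * q)) * G n) := by
  have hGen : IsQGenocchi q G := ⟨hG0, hG1, hG⟩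
  have hα' := hGen.C_mul_eq_of_qEuler_eq_mul_rescale hq0 hq (L := qEGF q α) <| by
    rw [qEuler_qEGF hq, rescale_qEGF]; exact hα
  have hβ' := hGen.C_mul_eq_of_eq_mul_rescale hq0 hq (B := qEGF q β) <| by
    rw [rescale_qEGF]; exact hβ
  have α_formula (n : ℕ) (hn : 1 ≤ n) :
      α n = -(1 / (2 * q)) * ∑ k ∈ range (n + 1), qChoose q n k * G k := by
    rw [← neg_div]; exact hGen.eq_of_C_mul_qEGF_eq hq0 hq hα' hn
  have β_formula (n : ℕ) (hn : 1 ≤ n) :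
      β n = (q - 1) / (2 * q) * ∑ k ∈ range (n + 1), qChoose q n k * G k :=
    hGen.eq_of_C_mul_qEGF_eq hq0 hq hβ' hn
  refine ⟨hGen.zero_eq_of_C_mul_qEGF_eq hq0 hq hα', α_formula, ?_, fun n hn => ?_,
    hGen.zero_eq_of_C_mul_qEGF_eq hq0 hq hβ', β_formula, ?_, fun n hn => ?_⟩
  · rw [α_formula 1 le_rfl, hGen.sum_qChoose_mul_one, mul_one]
  · rw [α_formula n (by omega), hGen.sum_qChoose_mul_eq_neg hn]; ring
  · rw [β_formula 1 le_rfl, hGen.sum_qChoose_mul_one, mul_one]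
  · rw [β_formula n (by omega), hGen.sum_qChoose_mul_eq_neg hn]; ring

/-- `q`-Genocchi `α`, `β` lemma. -/
theorem qGenocchi_alpha_beta
    {K : Type*} [Field K] [CharZero K] (q : K) (hq0 : q ≠ 0) (hq1 : q ≠ 1)
    (hq : ∀ n : ℕ, 1 ≤ n → qInt q n ≠ 0)
    (G : ℕ → K) (hG0 : G 0 = 0) (hG1 : G 1 = 1)
    (hG : ∀ n : ℕ, 2 ≤ n → G n + ∑ k ∈ Finset.range (n + 1), qChoose q n k * G k = 0)
    (α β : ℕ → K)
    (hα : PowerSeries.mk (fun n => if n = 0 then (0 : K) else G n / qFact q (n - 1)) =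
      PowerSeries.mk (fun n => α n / qFact q n) *
        PowerSeries.mk (fun n => G n * q ^ n / qFact q n))
    (hβ : PowerSeries.mk (fun n => G n / qFact q n) =
      PowerSeries.mk (fun n => β n / qFact q n) *
        PowerSeries.mk (fun n => G n * q ^ n / qFact q n)) :
    α 0 = 1 / q ∧
    (∀ n : ℕ, 1 ≤ n →
      α n = -(1 / (2 * q)) * ∑ k ∈ Finset.range (n + 1), qChoose q n k * G k) ∧
    α 1 = -(1 / (2 * q)) ∧
    (∀ n : ℕ, 2 ≤ n → α n = G n / (2 * q)) ∧
    β 0 = 1 / q ∧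
    (∀ n : ℕ, 1 ≤ n →
      β n = ((q - 1) / (2 * q)) * ∑ k ∈ Finset.range (n + 1), qChoose q n k * G k) ∧
    β 1 = (q - 1) / (2 * q) ∧
    (∀ n : ℕ, 2 ≤ n → β n = -((q - 1) / (2 * q)) * G n) :=
  qGenocchi_alpha_beta_general q hq0 hq G hG0 hG1 hG α β hα hβ
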